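/- Let m ≥ 1 and let v, w ∈ ℤ^{2m} be nontrivial vectors that are Hurwitz equivalent. Then Δ(v) = Δ(w), d(v) = d(w), and M(v) = M(w). -/

import Mathlib

/-- The alternating sum `Δ(v) = Σ (−1)^{i−1} v_i` (0-indexed: `Σ (−1)^i v_i`). -/
def altSum {n : ℕ} (v : Fin n → ℤ) : ℤ := ∑ i : Fin n, (-1 : ℤ) ^ (i : ℕ) * v i

/-- A vector is trivial if all its entries are equal. -/
def IsTrivialVec {n : ℕ} (v : Fin n → ℤ) : Prop := ∀ i j, v i = v j

/-- `d(v)`: the (nonnegative) greatest common divisor of all differences of entries. -/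
def dval {n : ℕ} (v : Fin n → ℤ) : ℕ :=
  (Finset.univ : Finset (Fin n × Fin n)).gcd fun p => (v p.1 - v p.2).natAbs

/-- `k(v)`: the 2-adic valuation of `d(v)`. -/
def kval {n : ℕ} (v : Fin n → ℤ) : ℕ := padicValNat 2 (dval v)

/-- The multiset of residues of the entries of `v` modulo `2d`. -/
def MresMod {n : ℕ} (v : Fin n → ℤ) (d : ℕ) : Multiset ℤ :=
  (Finset.univ.val : Multiset (Fin n)).map fun i => v i % (2 * (d : ℤ))

/-- `M(v)`: the multiset of residues of the entries of `v` modulo `2d(v)`. -/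
def Mres {n : ℕ} (v : Fin n → ℤ) : Multiset ℤ := MresMod v (dval v)

/-- `v'` is obtained from `v` by an elementary Hurwitz move `σ_i`:
`(v_i, v_{i+1}) ↦ (v_{i+1}, 2v_{i+1} − v_i)`, all other entries unchanged. -/
def IsHurwitzMove {n : ℕ} (v v' : Fin n → ℤ) : Prop :=
  ∃ (i : ℕ) (hi : i + 1 < n),
    v' ⟨i, Nat.lt_of_succ_lt hi⟩ = v ⟨i + 1, hi⟩ ∧
    v' ⟨i + 1, hi⟩ = 2 * v ⟨i + 1, hi⟩ - v ⟨i, Nat.lt_of_succ_lt hi⟩ ∧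
    ∀ j : Fin n, (j : ℕ) ≠ i → (j : ℕ) ≠ i + 1 → v' j = v j

/-- Hurwitz equivalence: a finite sequence of elementary Hurwitz moves and inverses. -/
def HurwitzEquiv {n : ℕ} (v w : Fin n → ℤ) : Prop :=
  Relation.ReflTransGen (fun a b => IsHurwitzMove a b ∨ IsHurwitzMove b a) v w

/-!
A move `v ↦ v'` swaps the entries at `a` and `b = a + 1` and then adds `2 * (v b - v a)` to the
entry at `b`. The swap changes `Δ` by `-2 * (-1) ^ b * (v b - v a)`, which the correction term
compensates. Since `v' b - v' a = v b - v a`, any `c` dividing the differences of `v` or of `v'`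
divides the correction term, so `c` divides the one set of differences if and only if it divides the
other. Finally, `d(v)` divides `v b - v a`, so modulo `2 * d(v)` the move is just a permutation of
the entries.
-/

section Invariants

variable {n : ℕ} {u v v' w : Fin n → ℤ}

theorem altSum_add (u v : Fin n → ℤ) : altSum (u + v) = altSum u + altSum v := by
  simp only [altSum, Pi.add_apply, mul_add, Finset.sum_add_distrib]

theorem altSum_single (b : Fin n) (x : ℤ) :
    altSum (Pi.single b x) = (-1) ^ (b : ℕ) * x := by
  simp only [altSum, Pi.single_apply, mul_ite, mul_zero, Finset.sum_ite_eq', Finset.mem_univ,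
    if_true]

theorem altSum_comp_swap {a b : Fin n} (hab : (b : ℕ) = a + 1) (v : Fin n → ℤ) :
    altSum (v ∘ Equiv.swap a b) = altSum v - (-1) ^ (b : ℕ) * (2 * (v b - v a)) := by
  have hne : a ≠ b := Fin.ne_of_val_ne (by lia)
  have swap_eq : v ∘ Equiv.swap a b = v + (Pi.single a (v b - v a) + Pi.single b (v a - v b)) := by
    ext j
    rcases eq_or_ne j a with rfl | hja
    · simp [hne]
    · rcases eq_or_ne j b with rfl | hjb
      · simp [hne.symm]
      · simp [Equiv.swap_apply_of_ne_of_ne hja hjb, hja, hjb]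
  rw [swap_eq, altSum_add, altSum_add, altSum_single, altSum_single, hab]
  ring

theorem dvd_dval_iff {c : ℕ} : c ∣ dval v ↔ ∀ i j, (c : ℤ) ∣ v i - v j := by
  simp only [dval, Finset.dvd_gcd_iff, Finset.mem_univ, true_implies, Prod.forall,
    Int.natCast_dvd]

theorem dval_dvd_sub (v : Fin n → ℤ) (i j : Fin n) : (dval v : ℤ) ∣ v i - v j :=
  dvd_dval_iff.mp dvd_rfl i j

theorem dvd_dval_iff_of_modEq {c : ℕ} (h : ∀ i, u i ≡ v i [ZMOD c]) :
    c ∣ dval u ↔ c ∣ dval v := by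
  have dvd_sub_iff (i j : Fin n) : (c : ℤ) ∣ u i - u j ↔ (c : ℤ) ∣ v i - v j :=
    ((h i).sub (h j)).dvd_iff
  simp only [dvd_dval_iff, dvd_sub_iff]

theorem dval_comp_perm (v : Fin n → ℤ) (e : Equiv.Perm (Fin n)) : dval (v ∘ e) = dval v := by
  refine Nat.dvd_left_iff_eq.mp fun c => ?_
  rw [dvd_dval_iff, dvd_dval_iff]
  exact (e.surjective.forall₂ (p := fun i j => (c : ℤ) ∣ v i - v j)).symm

theorem mresMod_congr {d : ℕ} (h : ∀ i, u i ≡ v i [ZMOD 2 * d]) : MresMod u d = MresMod v d :=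
  Multiset.map_congr rfl fun i _ => h i

theorem mresMod_comp_perm (v : Fin n → ℤ) (e : Equiv.Perm (Fin n)) (d : ℕ) :
    MresMod (v ∘ e) d = MresMod v d := by
  conv_rhs => rw [MresMod, ← Multiset.map_univ_val_equiv e, Multiset.map_map]
  rfl

namespace IsHurwitzMove

theorem exists_eq_comp_swap_add_single (h : IsHurwitzMove v v') :
    ∃ a b : Fin n, (b : ℕ) = a + 1 ∧
      v' = v ∘ Equiv.swap a b + Pi.single b (2 * (v b - v a)) := by
  obtain ⟨i, hi, at_left, at_right, elsewhere⟩ := h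
  refine ⟨⟨i, Nat.lt_of_succ_lt hi⟩, ⟨i + 1, hi⟩, rfl, ?_⟩
  ext j
  by_cases hji : (j : ℕ) = i
  · obtain rfl : j = ⟨i, Nat.lt_of_succ_lt hi⟩ := Fin.ext hji
    simp [at_left]
  · by_cases hji' : (j : ℕ) = i + 1
    · obtain rfl : j = ⟨i + 1, hi⟩ := Fin.ext hji'
      simp only [at_right, Pi.add_apply, Function.comp_apply, Equiv.swap_apply_right,
        Pi.single_eq_same]
      ring
    · have hja : j ≠ ⟨i, Nat.lt_of_succ_lt hi⟩ := Fin.ne_of_val_ne hji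
      have hjb : j ≠ ⟨i + 1, hi⟩ := Fin.ne_of_val_ne hji'
      simp [elsewhere j hji hji', Equiv.swap_apply_of_ne_of_ne hja hjb, hjb]

theorem altSum_eq (h : IsHurwitzMove v v') : altSum v = altSum v' := by
  obtain ⟨a, b, hab, rfl⟩ := h.exists_eq_comp_swap_add_single
  rw [altSum_add, altSum_single, altSum_comp_swap hab, sub_add_cancel]

theorem exists_modEq_comp_swap (h : IsHurwitzMove v v') :
    ∃ a b : Fin n, v' b - v' a = v b - v a ∧
      ∀ j, v' j ≡ (v ∘ Equiv.swap a b) j [ZMOD 2 * (v b - v a)] := by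
  obtain ⟨a, b, hab, rfl⟩ := h.exists_eq_comp_swap_add_single
  have hne : a ≠ b := Fin.ne_of_val_ne (by lia)
  refine ⟨a, b, ?_, fun j => ?_⟩
  · simp only [Pi.add_apply, Function.comp_apply, Equiv.swap_apply_left, Equiv.swap_apply_right,
      Pi.single_eq_same, Pi.single_eq_of_ne hne]
    ring
  · rcases eq_or_ne j b with rfl | hjb
    · simp
    · simp [hjb]

theorem dval_eq (h : IsHurwitzMove v v') : dval v = dval v' := by
  obtain ⟨a, b, sub_eq, modEq_swap⟩ := h.exists_modEq_comp_swap
  have dvd_iff {c : ℕ} (hc : (c : ℤ) ∣ v b - v a) : c ∣ dval v ↔ c ∣ dval v' := by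
    rw [← dval_comp_perm v (Equiv.swap a b)]
    exact (dvd_dval_iff_of_modEq fun j => (modEq_swap j).of_dvd (hc.mul_left 2)).symm
  refine Nat.dvd_antisymm ((dvd_iff (dval_dvd_sub v b a)).mp dvd_rfl) ?_
  exact (dvd_iff (sub_eq ▸ dval_dvd_sub v' b a)).mpr dvd_rfl

theorem mres_eq (h : IsHurwitzMove v v') : Mres v = Mres v' := by
  obtain ⟨a, b, -, modEq_swap⟩ := h.exists_modEq_comp_swap
  calc
    MresMod v (dval v) = MresMod (v ∘ Equiv.swap a b) (dval v) := (mresMod_comp_perm v _ _).symm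
    _ = MresMod v' (dval v) :=
      mresMod_congr fun j => ((modEq_swap j).of_dvd (mul_dvd_mul_left 2 (dval_dvd_sub v b a))).symm
    _ = MresMod v' (dval v') := by rw [h.dval_eq]

end IsHurwitzMove

theorem HurwitzEquiv.map_eq {α : Type*} {f : (Fin n → ℤ) → α}
    (hf : ∀ {u u'}, IsHurwitzMove u u' → f u = f u') (h : HurwitzEquiv v w) : f v = f w := by
  induction h with
  | refl => rfl
  | tail _ step ih => exact ih.trans (step.elim hf fun inverse => (hf inverse).symm)

end Invariants

theorem stmt_17_general {n : ℕ} {v w : Fin n → ℤ} (h : HurwitzEquiv v w) :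
    altSum v = altSum w ∧ dval v = dval w ∧ Mres v = Mres w :=
  ⟨h.map_eq IsHurwitzMove.altSum_eq, h.map_eq IsHurwitzMove.dval_eq, h.map_eq IsHurwitzMove.mres_eq⟩

/-- Hurwitz equivalent nontrivial vectors have the same Δ, d, and M. -/
theorem stmt_17 (m : ℕ) (hm : 1 ≤ m) (v w : Fin (2 * m) → ℤ)
    (hv : ¬ IsTrivialVec v) (hw : ¬ IsTrivialVec w)
    (h : HurwitzEquiv v w) :
    altSum v = altSum w ∧ dval v = dval w ∧ Mres v = Mres w :=
  stmt_17_general h
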